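/- For all natural numbers n, ℓ and c, K₃(n,ℓ,c) equals the number of color-preserving flip-equivalence classes of 2-colored planar binary trees with exactly n nodes, exactly c black nodes, and class cardinality 2^ℓ (equivalently, whose members have exactly ℓ internal positions with non-equivalent children subtrees); in particular K₃(n,ℓ,c) is a natural number. -/

import Mathlib

/-- 2-colored planar binary trees: each node carries a color, black = `true`. -/
inductive T2 : Type where
  | nil : T2
  | node : Bool → T2 → T2 → T2

/-- The number of nodes of a 2-colored planar binary tree. -/
def T2.nodes : T2 → ℕ
  | .nil => 0
  | .node _ a b => a.nodes + b.nodes + 1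

/-- The number of black (`true`) nodes of a 2-colored planar binary tree. -/
def T2.blacks : T2 → ℕ
  | .nil => 0
  | .node c a b => a.blacks + b.blacks + (if c then 1 else 0)

/-- Color-preserving flip equivalence: the least relation such that `nil ≈ nil` and,
whenever `a ≈ c` and `b ≈ d`, both `node col a b ≈ node col c d` and
`node col a b ≈ node col d c` for every color `col`. -/
inductive Flip2 : T2 → T2 → Prop where
  | nil : Flip2 .nil .nil
  | node {a b c d : T2} (col : Bool) :
      Flip2 a c → Flip2 b d → Flip2 (.node col a b) (.node col c d)
  | swap {a b c d : T2} (col : Bool) :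
      Flip2 a c → Flip2 b d → Flip2 (.node col a b) (.node col d c)

open Classical in
/-- The number of internal positions of a 2-colored tree whose two children subtrees are not
color-preserving flip-equivalent. -/
noncomputable def ell2 : T2 → ℕ
  | .nil => 0
  | .node _ a b => ell2 a + ell2 b + (if Flip2 a b then 0 else 1)

open Classical in
/-- The array `K3 n ℓ c`: base cases (taking precedence) `K3 0 0 0 = 1`; `K3 n ℓ c = 0`
whenever `ℓ ≥ n > 0` or `c > n`; `K3 n (n-1) c = C(n,c)` for `n ≥ 1` and `0 ≤ c ≤ n`;
`K3 n 0 c = 1` if `n = 2^r - 1` for some `r ≥ 1` and `0 ≤ c ≤ n`, and `K3 n 0 c = 0` for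
other `n ≥ 1`; otherwise, for `p, q, r ∈ {0,1}`,
`K3 (2n+p) (2ℓ+q) (2c+r) = p·(-1/2)^q·K3 n ℓ c + (1/2) · ∑_{δ=0, δ≤2c+r}^{1} ∑_{k=0}^{2n+p-1}
∑_{v=0}^{2ℓ+q-1} ∑_{m=0}^{2c+r-δ} K3 k v m · K3 (2n+p-1-k) (2ℓ+q-1-v) (2c+r-δ-m)`. -/
noncomputable def K3 : ℕ → ℕ → ℕ → ℚ
  | 0, l, c => if l = 0 ∧ c = 0 then 1 else 0
  | n + 1, l, c =>
    if n + 1 ≤ l ∨ n + 1 < c then 0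
    else if l = n then ((n + 1).choose c : ℚ)
    else if l = 0 then (if ∃ r : ℕ, 1 ≤ r ∧ n + 1 = 2 ^ r - 1 then 1 else 0)
    else
      (if (n + 1) % 2 = 1 then ((-1 : ℚ) / 2) ^ (l % 2) * K3 ((n + 1) / 2) (l / 2) (c / 2)
        else 0)
      + (1 / 2) * ∑ δ ∈ Finset.range 2, if δ ≤ c then
          (∑ k ∈ (Finset.range (n + 1)).attach, ∑ v ∈ Finset.range l,
            ∑ m ∈ Finset.range (c - δ + 1),
              K3 k.1 v m * K3 (n - k.1) (l - 1 - v) (c - δ - m)) else 0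
termination_by n l c => n
decreasing_by
  · omega
  · have := Finset.mem_range.mp k.2; omega
  · omega

/-!
Flip classes are unordered trees: a class is either empty or a root colour together with an
*unordered* pair of classes. Hence every class with two distinct subtrees comes from exactly two
ordered pairs, and every class with equal subtrees from exactly one. Passing from the ordered pairs
of distinct classes to all ordered pairs turns the former count into a convolution, at the price of
a diagonal term. On the diagonal `(A, A)` the node count and `ell` of `A` are half of the totals,
and the root colour is the parity of the number of black nodes. The diagonal therefore contributes
`1` when `ℓ` is even (equal subtrees add nothing to `ell`) and `-1/2` when `ℓ` is odd (the correction
to the convolution), which is the factor `(-1/2)^q` in the recurrence.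
-/

open Finset in
theorem two_mul_card_image_of_involution {α β : Type*} [DecidableEq β]
    {s : Finset α} {f : α → β} {σ : α → α} (hσ : ∀ x ∈ s, σ x ∈ s) (hne : ∀ x ∈ s, σ x ≠ x)
    (hf : ∀ x ∈ s, ∀ y ∈ s, f y = f x ↔ y = x ∨ y = σ x) : 2 * #(s.image f) = #s := by
  classical
  have hfiber : ∀ b ∈ s.image f, #{y ∈ s | f y = b} = 2 := by
    simp only [forall_mem_image]
    intro x hx
    have : {y ∈ s | f y = f x} = {x, σ x} := by
      ext y
      simp only [mem_filter, mem_insert, mem_singleton]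
      refine ⟨fun ⟨hy, heq⟩ => (hf x hx y hy).1 heq, ?_⟩
      rintro (rfl | rfl)
      · exact ⟨hx, rfl⟩
      · exact ⟨hσ x hx, (hf x hx _ (hσ x hx)).2 (.inr rfl)⟩
    rw [this, card_pair (hne x hx).symm]
  rw [card_eq_sum_card_image f s, sum_const_nat hfiber, mul_comm]

theorem isPowerOfTwo_add_two_iff_even_and_half (n : ℕ) :
    (n + 2).isPowerOfTwo ↔ Even n ∧ (n / 2 + 1).isPowerOfTwo := by
  constructor
  · rintro ⟨_ | r, hr⟩
    · omega
    · exact ⟨by grind, r, by grind⟩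
  · rintro ⟨hn, r, hr⟩
    exact ⟨r + 1, by grind⟩

theorem isPowerOfTwo_add_two_iff_exists_eq_sub_one (n : ℕ) :
    (n + 2).isPowerOfTwo ↔ ∃ r : ℕ, 1 ≤ r ∧ n + 1 = 2 ^ r - 1 := by
  constructor
  · rintro ⟨_ | r, hr⟩
    · omega
    · exact ⟨r + 1, by omega, by omega⟩
  · rintro ⟨r, -, hr⟩
    exact ⟨r, by omega⟩

namespace Flip2

theorem refl (t : T2) : Flip2 t t := by
  induction t with
  | nil => exact .nil
  | node col a b iha ihb => exact .node col iha ihb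

theorem symm {s t : T2} (h : Flip2 s t) : Flip2 t s := by
  induction h with
  | nil => exact .nil
  | node col _ _ iha ihb => exact .node col iha ihb
  | swap col _ _ iha ihb => exact .swap col ihb iha

theorem trans {s t u : T2} (hst : Flip2 s t) (htu : Flip2 t u) : Flip2 s u := by
  induction hst generalizing u with
  | nil => exact htu
  | node col _ _ iha ihb =>
    cases htu with
    | node _ hac hbd => exact .node col (iha hac) (ihb hbd)
    | swap _ hac hbd => exact .swap col (iha hac) (ihb hbd)
  | swap col _ _ iha ihb =>
    cases htu with
    | node _ hac hbd => exact .swap col (iha hbd) (ihb hac)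
    | swap _ hac hbd => exact .node col (iha hbd) (ihb hac)

theorem nodes_eq {s t : T2} (h : Flip2 s t) : s.nodes = t.nodes := by
  induction h with
  | nil => rfl
  | node _ _ _ iha ihb => simp only [T2.nodes, iha, ihb]
  | swap _ _ _ iha ihb => simp only [T2.nodes, iha, ihb, add_comm]

theorem blacks_eq {s t : T2} (h : Flip2 s t) : s.blacks = t.blacks := by
  induction h with
  | nil => rfl
  | node _ _ _ iha ihb => simp only [T2.blacks, iha, ihb]
  | swap _ _ _ iha ihb => simp only [T2.blacks, iha, ihb, add_comm]

theorem congr {a b c d : T2} (hac : Flip2 a c) (hbd : Flip2 b d) : Flip2 a b ↔ Flip2 c d :=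
  ⟨fun hab => hac.symm.trans (hab.trans hbd), fun hcd => hac.trans (hcd.trans hbd.symm)⟩

theorem comm {s t : T2} : Flip2 s t ↔ Flip2 t s :=
  ⟨symm, symm⟩

theorem ell2_eq {s t : T2} (h : Flip2 s t) : ell2 s = ell2 t := by
  classical
  induction h with
  | nil => rfl
  | node _ hac hbd iha ihb => rw [ell2, ell2, iha, ihb, if_congr (hac.congr hbd) rfl rfl]
  | swap _ hac hbd iha ihb =>
    rw [ell2, ell2, iha, ihb, if_congr ((hac.congr hbd).trans comm) rfl rfl, add_comm (ell2 _)]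

/-- Flip equivalence as a setoid, used to form the type of flip classes. -/
instance setoid : Setoid T2 := ⟨Flip2, refl, symm, trans⟩

end Flip2

/-- Colour-preserving flip-equivalence classes of trees, as a quotient type. -/
abbrev FlipClass : Type := Quotient Flip2.setoid

namespace FlipClass

open Finset

/-- The class of the empty tree. -/
def nil : FlipClass := ⟦T2.nil⟧

/-- The class whose root has colour `col` and whose subtrees are the classes `A` and `B`. -/
def node (col : Bool) : FlipClass → FlipClass → FlipClass :=
  Quotient.map₂ (T2.node col) fun _ _ hac _ _ hbd => Flip2.node col hac hbd

/-- The number of nodes of any member of a class. -/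
def nodes : FlipClass → ℕ := Quotient.lift T2.nodes fun _ _ h => h.nodes_eq

/-- The number of black nodes of any member of a class. -/
def blacks : FlipClass → ℕ := Quotient.lift T2.blacks fun _ _ h => h.blacks_eq

/-- The number of positions with non-equivalent subtrees in any member of a class. -/
noncomputable def ell : FlipClass → ℕ := Quotient.lift ell2 fun _ _ h => h.ell2_eq

noncomputable instance : DecidableEq FlipClass := Classical.decEq _

@[elab_as_elim]
theorem induction {motive : FlipClass → Prop} (nil : motive nil)
    (node : ∀ col A B, motive A → motive B → motive (node col A B)) (q : FlipClass) :
    motive q := by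
  induction q using Quotient.inductionOn with | h t =>
  induction t with
  | nil => exact nil
  | node col a b iha ihb => exact node col ⟦a⟧ ⟦b⟧ iha ihb

theorem node_comm (col : Bool) (A B : FlipClass) : node col A B = node col B A := by
  induction A, B using Quotient.inductionOn₂ with | h a b =>
  exact Quotient.sound (.swap col (.refl a) (.refl b))

theorem node_inj {col col' : Bool} {A B A' B' : FlipClass} :
    node col A B = node col' A' B' ↔ col = col' ∧ s(A, B) = s(A', B') := by
  induction A, B using Quotient.inductionOn₂ with | h a b =>
  induction A', B' using Quotient.inductionOn₂ with | h a' b' =>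
  rw [Sym2.eq_iff]
  simp only [node, Quotient.map₂_mk, Quotient.eq]
  constructor
  · rintro (_ | ⟨_, ha, hb⟩ | ⟨_, ha, hb⟩)
    · exact ⟨rfl, .inl ⟨ha, hb⟩⟩
    · exact ⟨rfl, .inr ⟨ha, hb⟩⟩
  · rintro ⟨rfl, ⟨ha, hb⟩ | ⟨ha, hb⟩⟩
    · exact .node _ ha hb
    · exact .swap _ ha hb

@[simp] theorem nodes_nil : nil.nodes = 0 := rfl

@[simp] theorem blacks_nil : nil.blacks = 0 := rfl

@[simp] theorem ell_nil : nil.ell = 0 := rfl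

@[simp]
theorem nodes_node (col : Bool) (A B : FlipClass) :
    (node col A B).nodes = A.nodes + B.nodes + 1 := by
  induction A, B using Quotient.inductionOn₂
  rfl

@[simp]
theorem blacks_node (col : Bool) (A B : FlipClass) :
    (node col A B).blacks = A.blacks + B.blacks + col.toNat := by
  induction A, B using Quotient.inductionOn₂
  cases col <;> rfl

theorem ell_node (col : Bool) (A B : FlipClass) :
    (node col A B).ell = A.ell + B.ell + if A = B then 0 else 1 := by
  induction A, B using Quotient.inductionOn₂ with | h a b =>
  classical
  have hiff : Flip2 a b ↔ (⟦a⟧ : FlipClass) = ⟦b⟧ := (Quotient.eq (r := Flip2.setoid)).symm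
  exact congrArg (ell2 a + ell2 b + ·) (if_congr hiff rfl rfl)

@[simp]
theorem ell_node_self (col : Bool) (A : FlipClass) : (node col A A).ell = A.ell + A.ell := by
  simp [ell_node]

theorem ell_node_of_ne (col : Bool) {A B : FlipClass} (h : A ≠ B) :
    (node col A B).ell = A.ell + B.ell + 1 := by
  simp [ell_node, h]

theorem nodes_eq_zero {q : FlipClass} : q.nodes = 0 ↔ q = nil := by
  refine ⟨fun h => ?_, fun h => h ▸ nodes_nil⟩
  induction q using induction with
  | nil => rfl
  | node => simp at h

theorem blacks_le_nodes (q : FlipClass) : q.blacks ≤ q.nodes := by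
  induction q using induction with
  | nil => simp
  | node col A B ihA ihB =>
    have := col.toNat_le
    simp only [blacks_node, nodes_node]
    omega

/-- Truncated subtraction makes the bound correct for `nil` as well. -/
theorem ell_le_nodes_sub_one (q : FlipClass) : q.ell ≤ q.nodes - 1 := by
  induction q using induction with
  | nil => simp
  | node col A B ihA ihB =>
    by_cases hAB : A = B
    · subst hAB
      simp only [ell_node_self, nodes_node]
      omega
    · have hnodes : ¬(A.nodes = 0 ∧ B.nodes = 0) := fun ⟨hA, hB⟩ =>
        hAB ((nodes_eq_zero.1 hA).trans (nodes_eq_zero.1 hB).symm)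
      simp only [ell_node_of_ne col hAB, nodes_node]
      omega

theorem finite_setOf_nodes_le (n : ℕ) : {q : FlipClass | q.nodes ≤ n}.Finite := by
  induction n with
  | zero => exact (Set.finite_singleton nil).subset fun q hq => nodes_eq_zero.1 (Nat.le_zero.1 hq)
  | succ n ih =>
    refine (((Set.finite_univ.prod (ih.prod ih)).image fun p : Bool × FlipClass × FlipClass =>
      node p.1 p.2.1 p.2.2).insert nil).subset fun q hq => ?_
    induction q using induction with
    | nil => exact .inl rfl
    | node col A B =>
      have hle : A.nodes + B.nodes ≤ n := by simpa using hq
      exact .inr ⟨(col, A, B), ⟨trivial, (Nat.le_add_right _ _).trans hle,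
        (Nat.le_add_left _ _).trans hle⟩, rfl⟩

/-- The classes with `n` nodes, `ell` equal to `l` and `c` black nodes. Their number is the quantity
computed by `K3 n l c`. -/
noncomputable def ofSize (n l c : ℕ) : Finset FlipClass :=
  Set.Finite.toFinset (s := {q | q.nodes = n ∧ q.ell = l ∧ q.blacks = c})
    ((finite_setOf_nodes_le n).subset fun _ hq => hq.1.le)

@[simp]
theorem mem_ofSize {n l c : ℕ} {q : FlipClass} :
    q ∈ ofSize n l c ↔ q.nodes = n ∧ q.ell = l ∧ q.blacks = c := by
  simp [ofSize]

theorem card_ofSize_zero (l c : ℕ) : #(ofSize 0 l c) = if l = 0 ∧ c = 0 then 1 else 0 := by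
  have hmem (q : FlipClass) : q ∈ ofSize 0 l c ↔ q = nil ∧ l = 0 ∧ c = 0 := by
    rw [mem_ofSize, nodes_eq_zero]
    refine and_congr_right fun hq => ?_
    simp [hq, eq_comm]
  split_ifs with h
  · exact card_eq_one.2 ⟨nil, by ext q; rw [hmem, mem_singleton, and_iff_left h]⟩
  · exact card_eq_zero.2 (eq_empty_of_forall_notMem fun q hq => h ((hmem q).1 hq).2)

theorem ofSize_succ_eq_empty {n l c : ℕ} (h : n + 1 ≤ l ∨ n + 1 < c) : ofSize (n + 1) l c = ∅ := by
  refine eq_empty_of_forall_notMem fun q hq => ?_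
  have := q.ell_le_nodes_sub_one
  have := q.blacks_le_nodes
  rw [mem_ofSize] at hq
  omega

/-- Ordered pairs of classes with the given totals. -/
noncomputable def pairsOfSize (n l c : ℕ) : Finset (FlipClass × FlipClass) :=
  Set.Finite.toFinset
    (s := {p | p.1.nodes + p.2.nodes = n ∧ p.1.ell + p.2.ell = l ∧ p.1.blacks + p.2.blacks = c})
    (((finite_setOf_nodes_le n).prod (finite_setOf_nodes_le n)).subset fun _ hp =>
      ⟨(Nat.le_add_right _ _).trans hp.1.le, (Nat.le_add_left _ _).trans hp.1.le⟩)

@[simp]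
theorem mem_pairsOfSize {n l c : ℕ} {p : FlipClass × FlipClass} :
    p ∈ pairsOfSize n l c ↔
      p.1.nodes + p.2.nodes = n ∧ p.1.ell + p.2.ell = l ∧ p.1.blacks + p.2.blacks = c := by
  simp [pairsOfSize]

theorem card_pairsOfSize (n l c : ℕ) :
    #(pairsOfSize n l c) = ∑ k ∈ range (n + 1), ∑ v ∈ range (l + 1), ∑ m ∈ range (c + 1),
      #(ofSize k v m) * #(ofSize (n - k) (l - v) (c - m)) := by
  have hmaps : ∀ p ∈ pairsOfSize n l c, (p.1.nodes, p.1.ell, p.1.blacks) ∈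
      range (n + 1) ×ˢ range (l + 1) ×ˢ range (c + 1) := by
    simp only [mem_pairsOfSize, mem_product, mem_range]
    omega
  simp only [card_eq_sum_card_fiberwise hmaps, sum_product, ← card_product]
  refine sum_congr rfl fun k hk => sum_congr rfl fun v hv => sum_congr rfl fun m hm => ?_
  congr 1
  ext ⟨A, B⟩
  simp only [mem_range] at hk hv hm
  simp only [mem_filter, mem_pairsOfSize, mem_product, mem_ofSize, Prod.mk.injEq]
  omega

section Colored

variable {α : Type*}

/-- Attaches a root colour to the elements of a family graded by the number of black nodes, so that
the total number of black nodes, root included, is `c`. The pairs live in a sigma type because the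
finset that the second component ranges over depends on the first. -/
def colored (s : ℕ → Finset α) (c : ℕ) : Finset (Σ _ : Bool, α) :=
  univ.sigma fun col => if col.toNat ≤ c then s (c - col.toNat) else ∅

theorem mem_colored {s : ℕ → Finset α} {c : ℕ} {p : Σ _ : Bool, α} :
    p ∈ colored s c ↔ p.1.toNat ≤ c ∧ p.2 ∈ s (c - p.1.toNat) := by
  by_cases h : p.1.toNat ≤ c <;> simp [colored, h]

theorem card_colored (s : ℕ → Finset α) (c : ℕ) :
    #(colored s c) = ∑ δ ∈ range 2, if δ ≤ c then #(s (c - δ)) else 0 := by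
  simp [colored, card_sigma, apply_ite card, sum_range_succ, add_comm]

end Colored

/-- Root colours and ordered pairs of subtrees with the given totals. The root counts towards the
black nodes `c`, but neither towards the nodes `n` nor towards `l`. -/
noncomputable def splits (n l c : ℕ) : Finset (Σ _ : Bool, FlipClass × FlipClass) :=
  colored (pairsOfSize n l) c

@[simp]
theorem mk_mem_splits {n l c : ℕ} {col : Bool} {A B : FlipClass} :
    ⟨col, A, B⟩ ∈ splits n l c ↔ A.nodes + B.nodes = n ∧ A.ell + B.ell = l ∧
      A.blacks + B.blacks + col.toNat = c := by
  simp only [splits, mem_colored, mem_pairsOfSize]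
  omega

theorem card_splits (n l c : ℕ) :
    #(splits n l c) = ∑ δ ∈ range 2, if δ ≤ c then
      (∑ k ∈ range (n + 1), ∑ v ∈ range (l + 1), ∑ m ∈ range (c - δ + 1),
        #(ofSize k v m) * #(ofSize (n - k) (l - v) (c - δ - m))) else 0 := by
  simp only [splits, card_colored, card_pairsOfSize]

/-- The splits whose two subtrees are equal. -/
noncomputable def diagSplits (n l c : ℕ) : Finset (Σ _ : Bool, FlipClass × FlipClass) :=
  {p ∈ splits n l c | p.2.1 = p.2.2}

/-- The splits whose two subtrees are distinct. -/
noncomputable def offDiagSplits (n l c : ℕ) : Finset (Σ _ : Bool, FlipClass × FlipClass) :=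
  {p ∈ splits n l c | p.2.1 ≠ p.2.2}

theorem mk_mem_diagSplits {n l c : ℕ} {col : Bool} {A B : FlipClass} :
    ⟨col, A, B⟩ ∈ diagSplits n l c ↔ (A.nodes + A.nodes = n ∧ A.ell + A.ell = l ∧
      A.blacks + A.blacks + col.toNat = c) ∧ A = B := by
  simp only [diagSplits, mem_filter, mk_mem_splits]
  exact and_congr_left fun h => by rw [h]

theorem mk_mem_offDiagSplits {n l c : ℕ} {col : Bool} {A B : FlipClass} :
    ⟨col, A, B⟩ ∈ offDiagSplits n l c ↔ (A.nodes + B.nodes = n ∧ A.ell + B.ell = l ∧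
      A.blacks + B.blacks + col.toNat = c) ∧ A ≠ B := by
  simp only [offDiagSplits, mem_filter, mk_mem_splits]

theorem card_diagSplits_add_card_offDiagSplits (n l c : ℕ) :
    #(diagSplits n l c) + #(offDiagSplits n l c) = #(splits n l c) :=
  card_filter_add_card_filter_not _

theorem card_diagSplits_of_even {n l : ℕ} (hn : Even n) (hl : Even l) (c : ℕ) :
    #(diagSplits n l c) = #(ofSize (n / 2) (l / 2) (c / 2)) := by
  obtain ⟨n, rfl⟩ := hn
  obtain ⟨l, rfl⟩ := hl
  refine card_bij' (fun p _ => p.2.1) (fun A _ => ⟨decide (c % 2 = 1), A, A⟩) ?_ ?_ ?_ ?_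
  · rintro ⟨col, A, B⟩ hp
    have := col.toNat_le
    have := mk_mem_diagSplits.1 hp
    exact mem_ofSize.2 (by dsimp only; omega)
  · intro A hA
    rw [mem_ofSize] at hA
    have hcol : (decide (c % 2 = 1)).toNat = c % 2 := by
      rcases Nat.mod_two_eq_zero_or_one c with h | h <;> simp [h]
    exact mk_mem_diagSplits.2 ⟨by omega, rfl⟩
  · rintro ⟨col, A, B⟩ hp
    obtain ⟨⟨-, -, rfl⟩, rfl⟩ := mk_mem_diagSplits.1 hp
    have hcol : decide ((A.blacks + A.blacks + col.toNat) % 2 = 1) = col := by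
      cases col <;> simp [← two_mul, Nat.add_mod]
    simp only [hcol]
  · exact fun _ _ => rfl

theorem diagSplits_eq_empty {n l : ℕ} (h : ¬(Even n ∧ Even l)) (c : ℕ) : diagSplits n l c = ∅ := by
  refine eq_empty_of_forall_notMem fun ⟨col, A, B⟩ hp => h ?_
  obtain ⟨⟨hn, hl, -⟩, -⟩ := mk_mem_diagSplits.1 hp
  exact ⟨⟨_, hn.symm⟩, ⟨_, hl.symm⟩⟩

/-- The class with a given root colour and given subtrees. -/
def ofSplit (p : Σ _ : Bool, FlipClass × FlipClass) : FlipClass :=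
  node p.1 p.2.1 p.2.2

theorem mem_image_diagSplits {n l c : ℕ} {q : FlipClass} :
    q ∈ (diagSplits n l c).image ofSplit ↔ ∃ col A, node col A A = q ∧ A.nodes + A.nodes = n ∧
      A.ell + A.ell = l ∧ A.blacks + A.blacks + col.toNat = c := by
  rw [mem_image]
  constructor
  · rintro ⟨⟨col, A, B⟩, hp, rfl⟩
    obtain ⟨hsize, rfl⟩ := mk_mem_diagSplits.1 hp
    exact ⟨col, A, rfl, hsize⟩
  · rintro ⟨col, A, rfl, hsize⟩
    exact ⟨⟨col, A, A⟩, mk_mem_diagSplits.2 ⟨hsize, rfl⟩, rfl⟩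

theorem mem_image_offDiagSplits {n l c : ℕ} {q : FlipClass} :
    q ∈ (offDiagSplits n l c).image ofSplit ↔ ∃ col A B, node col A B = q ∧ A ≠ B ∧
      A.nodes + B.nodes = n ∧ A.ell + B.ell = l ∧ A.blacks + B.blacks + col.toNat = c := by
  rw [mem_image]
  constructor
  · rintro ⟨⟨col, A, B⟩, hp, rfl⟩
    obtain ⟨hsize, hAB⟩ := mk_mem_offDiagSplits.1 hp
    exact ⟨col, A, B, rfl, hAB, hsize⟩
  · rintro ⟨col, A, B, rfl, hAB, hsize⟩
    exact ⟨⟨col, A, B⟩, mk_mem_offDiagSplits.2 ⟨hsize, hAB⟩, rfl⟩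

theorem ofSize_succ_zero (n c : ℕ) :
    ofSize (n + 1) 0 c = (diagSplits n 0 c).image ofSplit := by
  ext q
  rw [mem_ofSize, mem_image_diagSplits]
  constructor
  · induction q using induction with
    | nil => simp
    | node col A B =>
      by_cases hAB : A = B
      · subst hAB
        simp only [nodes_node, ell_node_self, blacks_node]
        exact fun h => ⟨col, A, rfl, by omega⟩
      · simp [ell_node_of_ne col hAB]
  · rintro ⟨col, A, rfl, h⟩
    simp only [nodes_node, ell_node_self, blacks_node]
    omega

theorem ofSize_succ_succ (n l c : ℕ) :
    ofSize (n + 1) (l + 1) c =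
      (diagSplits n (l + 1) c).image ofSplit ∪ (offDiagSplits n l c).image ofSplit := by
  ext q
  rw [mem_ofSize, mem_union, mem_image_diagSplits, mem_image_offDiagSplits]
  constructor
  · induction q using induction with
    | nil => simp
    | node col A B =>
      by_cases hAB : A = B
      · subst hAB
        simp only [nodes_node, ell_node_self, blacks_node]
        exact fun h => .inl ⟨col, A, rfl, by omega⟩
      · simp only [nodes_node, ell_node_of_ne col hAB, blacks_node]
        exact fun h => .inr ⟨col, A, B, rfl, hAB, by omega⟩
  · rintro (⟨col, A, rfl, h⟩ | ⟨col, A, B, rfl, hAB, h⟩)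
    · simp only [nodes_node, ell_node_self, blacks_node]
      omega
    · simp only [nodes_node, ell_node_of_ne col hAB, blacks_node]
      omega

theorem card_image_diagSplits (n l c : ℕ) :
    #((diagSplits n l c).image ofSplit) = #(diagSplits n l c) := by
  refine card_image_of_injOn ?_
  rintro ⟨col, A, B⟩ hp ⟨col', A', B'⟩ hp' heq
  obtain rfl : A = B := (mem_filter.1 hp).2
  obtain rfl : A' = B' := (mem_filter.1 hp').2
  simp_all [ofSplit, node_inj]

theorem disjoint_image_diagSplits_image_offDiagSplits (n l l' c : ℕ) :
    Disjoint ((diagSplits n l c).image ofSplit) ((offDiagSplits n l' c).image ofSplit) := by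
  refine disjoint_left.2 fun q hdiag hoff => ?_
  obtain ⟨_, A, rfl, -⟩ := mem_image_diagSplits.1 hdiag
  obtain ⟨_, A', B', heq, hne, -⟩ := mem_image_offDiagSplits.1 hoff
  obtain ⟨rfl, rfl⟩ | ⟨rfl, rfl⟩ := Sym2.eq_iff.1 (node_inj.1 heq).2 <;> exact hne rfl

theorem two_mul_card_image_offDiagSplits (n l c : ℕ) :
    2 * #((offDiagSplits n l c).image ofSplit) = #(offDiagSplits n l c) := by
  refine two_mul_card_image_of_involution (σ := fun p => ⟨p.1, p.2.swap⟩) ?_ ?_ ?_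
  · rintro ⟨col, A, B⟩ hp
    obtain ⟨hsize, hAB⟩ := mk_mem_offDiagSplits.1 hp
    exact mk_mem_offDiagSplits.2 ⟨by dsimp only; omega, hAB.symm⟩
  · rintro ⟨col, A, B⟩ hp heq
    obtain ⟨-, hAB⟩ := mk_mem_offDiagSplits.1 hp
    simp_all
  · rintro ⟨col, A, B⟩ - ⟨col', A', B'⟩ -
    simp [ofSplit, node_inj, and_or_left]

theorem card_ofSize_succ_zero (n c : ℕ) : #(ofSize (n + 1) 0 c) = #(diagSplits n 0 c) := by
  rw [ofSize_succ_zero, card_image_diagSplits]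

theorem two_mul_card_ofSize_succ_succ (n l c : ℕ) :
    2 * #(ofSize (n + 1) (l + 1) c) + #(diagSplits n l c) =
      2 * #(diagSplits n (l + 1) c) + #(splits n l c) := by
  rw [ofSize_succ_succ, card_union_of_disjoint (disjoint_image_diagSplits_image_offDiagSplits ..),
    card_image_diagSplits, mul_add, two_mul_card_image_offDiagSplits,
    ← card_diagSplits_add_card_offDiagSplits]
  ring

theorem ite_card_ofSize_eq_card_diagSplits_sub (n l c : ℕ) :
    (if (n + 1) % 2 = 1 then
      ((-1 : ℚ) / 2) ^ ((l + 1) % 2) * #(ofSize ((n + 1) / 2) ((l + 1) / 2) (c / 2)) else 0) =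
      #(diagSplits n (l + 1) c) - 1 / 2 * #(diagSplits n l c) := by
  rcases Nat.even_or_odd n with hn | hn
  · have hhalf : (n + 1) / 2 = n / 2 := by grind
    rw [if_pos (by grind), hhalf]
    rcases Nat.even_or_odd l with hl | hl
    · have hlhalf : (l + 1) / 2 = l / 2 := by grind
      have hlmod : (l + 1) % 2 = 1 := by grind
      rw [card_diagSplits_of_even hn hl, diagSplits_eq_empty (by grind), hlhalf, hlmod,
        card_empty]
      ring
    · have hlmod : (l + 1) % 2 = 0 := by grind
      rw [card_diagSplits_of_even hn hl.add_one, diagSplits_eq_empty (by grind), hlmod,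
        card_empty]
      ring
  · rw [if_neg (by grind), diagSplits_eq_empty (by grind), diagSplits_eq_empty (by grind),
      card_empty]
    ring

theorem card_ofSize_succ (n l c : ℕ) :
    (#(ofSize (n + 1) l c) : ℚ) =
      (if (n + 1) % 2 = 1 then
        ((-1 : ℚ) / 2) ^ (l % 2) * #(ofSize ((n + 1) / 2) (l / 2) (c / 2)) else 0)
      + (1 / 2) * ∑ δ ∈ range 2, if δ ≤ c then
          (∑ k ∈ range (n + 1), ∑ v ∈ range l, ∑ m ∈ range (c - δ + 1),
            (#(ofSize k v m) : ℚ) * #(ofSize (n - k) (l - 1 - v) (c - δ - m))) else 0 := by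
  rcases l with _ | l
  · rw [card_ofSize_succ_zero]
    rcases Nat.even_or_odd n with hn | hn
    · have hhalf : (n + 1) / 2 = n / 2 := by grind
      simp [card_diagSplits_of_even hn Even.zero, hhalf, Nat.even_iff.1 hn, Nat.add_mod]
    · have hmod : (n + 1) % 2 = 0 := by grind
      simp [diagSplits_eq_empty (fun h => Nat.not_even_iff_odd.2 hn h.1), hmod]
  · have hsplits := congrArg (Nat.cast (R := ℚ)) (card_splits n l c)
    push_cast at hsplits
    have hcard := congrArg (Nat.cast (R := ℚ)) (two_mul_card_ofSize_succ_succ n l c)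
    push_cast at hcard
    rw [Nat.add_sub_cancel, ← hsplits]
    linarith [ite_card_ofSize_eq_card_diagSplits_sub n l c]

theorem card_ofSize_zero_ell (n c : ℕ) :
    #(ofSize n 0 c) = if c ≤ n ∧ (n + 1).isPowerOfTwo then 1 else 0 := by
  induction n using Nat.strong_induction_on generalizing c with
  | _ n ih =>
  rcases n with _ | n
  · simp [card_ofSize_zero, Nat.isPowerOfTwo_one]
  · rw [card_ofSize_succ_zero]
    rcases Nat.even_or_odd n with hn | hn
    · rw [card_diagSplits_of_even hn .zero, Nat.zero_div, ih _ (by omega)]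
      refine if_congr (and_congr (by grind) ?_) rfl rfl
      rw [isPowerOfTwo_add_two_iff_even_and_half, and_iff_right hn]
    · rw [diagSplits_eq_empty (by grind), card_empty, if_neg]
      rw [isPowerOfTwo_add_two_iff_even_and_half]
      grind

theorem ofSize_succ_succ_self (n c : ℕ) :
    ofSize (n + 2) (n + 1) c =
      (colored (ofSize (n + 1) n) c).image fun p => node p.1 p.2 nil := by
  ext q
  rw [mem_ofSize, mem_image]
  constructor
  · induction q using induction with
    | nil => simp
    | node col A B =>
      have := A.ell_le_nodes_sub_one
      have := B.ell_le_nodes_sub_one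
      simp only [nodes_node, ell_node, blacks_node]
      intro h
      -- Two nonempty subtrees `A`, `B` would give `ell ≤ (A.nodes - 1) + (B.nodes - 1) + 1 = n`.
      obtain hA | hB : A.nodes = 0 ∨ B.nodes = 0 := by grind
      · obtain rfl := nodes_eq_zero.1 hA
        exact ⟨⟨col, B⟩, mem_colored.2 (by grind [mem_ofSize, nodes_nil, ell_nil, blacks_nil]),
          node_comm ..⟩
      · obtain rfl := nodes_eq_zero.1 hB
        exact ⟨⟨col, A⟩, mem_colored.2 (by grind [mem_ofSize, nodes_nil, ell_nil, blacks_nil]),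
          rfl⟩
  · rintro ⟨⟨col, A⟩, hA, rfl⟩
    obtain ⟨hc, hA⟩ := mem_colored.1 hA
    dsimp only at hc hA
    rw [mem_ofSize] at hA
    have hne : A ≠ nil := by rintro rfl; simp at hA
    simp only [nodes_node, nodes_nil, ell_node_of_ne col hne, ell_nil, blacks_node, blacks_nil]
    omega

theorem node_nil_injective :
    Function.Injective fun p : Σ _ : Bool, FlipClass => node p.1 p.2 nil := by
  rintro ⟨col, A⟩ ⟨col', A'⟩ h
  obtain ⟨hcol, hA⟩ := node_inj.1 h
  exact Sigma.ext hcol (heq_of_eq (Sym2.congr_left.1 hA))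

theorem card_ofSize_succ_self (n c : ℕ) : #(ofSize (n + 1) n c) = (n + 1).choose c := by
  induction n generalizing c with
  | zero =>
    rw [card_ofSize_zero_ell]
    have hpow : (0 + 1 + 1).isPowerOfTwo := ⟨1, rfl⟩
    rcases c with _ | _ | c <;> simp [hpow, Nat.choose_eq_zero_of_lt]
  | succ n ih =>
    rw [ofSize_succ_succ_self, card_image_of_injective _ node_nil_injective, card_colored]
    rcases c with _ | c
    · simp [ih]
    · simp [ih, sum_range_succ, Nat.choose_succ_succ' (n + 1) c, add_comm ((n + 1).choose c)]

theorem cast_card_ofSize (n l c : ℕ) : (#(ofSize n l c) : ℚ) = K3 n l c := by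
  classical
  induction n using Nat.strong_induction_on generalizing l c with
  | _ n ih =>
  rcases n with _ | n
  · simp [card_ofSize_zero, K3]
  rw [K3]
  by_cases hout : n + 1 ≤ l ∨ n + 1 < c
  · rw [if_pos hout, ofSize_succ_eq_empty hout, card_empty, Nat.cast_zero]
  rw [if_neg hout]
  by_cases hmax : l = n
  · rw [if_pos hmax, hmax, card_ofSize_succ_self]
  rw [if_neg hmax]
  by_cases hzero : l = 0
  · rw [if_pos hzero, hzero, card_ofSize_zero_ell, Nat.cast_ite, Nat.cast_one, Nat.cast_zero]
    refine if_congr ?_ rfl rfl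
    rw [and_iff_right (by omega), isPowerOfTwo_add_two_iff_exists_eq_sub_one]
  rw [if_neg hzero, card_ofSize_succ, ih _ (by omega)]
  congr! 5 with δ _
  rw [← sum_attach]
  refine sum_congr rfl fun k _ => sum_congr rfl fun v _ => sum_congr rfl fun m _ => ?_
  have := mem_range.1 k.2
  rw [ih _ (by omega), ih _ (by omega)]

/-- The set of trees in a class. -/
def toSet (q : FlipClass) : Set T2 :=
  {s | ⟦s⟧ = q}

theorem toSet_mk (t : T2) : toSet ⟦t⟧ = {s | Flip2 s t} :=
  Set.ext fun _ => Quotient.eq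

theorem toSet_injective : Function.Injective toSet := by
  intro p q h
  induction p using Quotient.inductionOn with | h t =>
  exact h.subset (rfl : ⟦t⟧ = _)

theorem setOf_eq_image_toSet (n l c : ℕ) :
    {C : Set T2 | ∃ t : T2, t.nodes = n ∧ t.blacks = c ∧ ell2 t = l ∧ C = {s : T2 | Flip2 s t}} =
      toSet '' ofSize n l c := by
  ext C
  constructor
  · rintro ⟨t, hn, hc, hl, rfl⟩
    exact ⟨⟦t⟧, mem_ofSize.2 ⟨hn, hl, hc⟩, toSet_mk t⟩
  · rintro ⟨q, hq, rfl⟩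
    induction q using Quotient.inductionOn with | h t =>
    obtain ⟨hn, hl, hc⟩ := mem_ofSize.1 hq
    exact ⟨t, hn, hc, hl, toSet_mk t⟩

end FlipClass

/-- `K3 n ℓ c` equals the number of color-preserving flip-equivalence classes of 2-colored
planar binary trees with exactly `n` nodes, exactly `c` black nodes, and class cardinality
`2^ℓ` (equivalently, whose members have exactly `ℓ` internal positions with non-equivalent
children subtrees); in particular `K3 n ℓ c` is a natural number. -/
theorem K3_counts_classes (n ℓ c : ℕ) :
    {C : Set T2 | ∃ t : T2, t.nodes = n ∧ t.blacks = c ∧ ell2 t = ℓ ∧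
      C = {s : T2 | Flip2 s t}}.Finite ∧
    ({C : Set T2 | ∃ t : T2, t.nodes = n ∧ t.blacks = c ∧ ell2 t = ℓ ∧
      C = {s : T2 | Flip2 s t}}.ncard : ℚ) = K3 n ℓ c := by
  rw [FlipClass.setOf_eq_image_toSet]
  refine ⟨(Finset.finite_toSet _).image _, ?_⟩
  rw [Set.ncard_image_of_injective _ FlipClass.toSet_injective, Set.ncard_coe_finset,
    FlipClass.cast_card_ofSize]
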